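/- Let P, I, C be n×n matrices with entries in ℝ ∪ {-∞} such that P_{jj} ≠ -∞ for every index j. Over the three-letter alphabet Σ = {p, i, c} with μ(p) = P, μ(i) = I, μ(c) = C, let 𝒫 = {c}^* · {p} · {c}^*, ℐ = {c}^* · {i} · {c}^*, and S = S(𝒫, ℐ, ⌊n/2⌋). Then G(P ⊕ I ⊕ C) ∈ Γ (equivalently, the multi-precedence graph G(P, I, C) contains no circuit with positive weight) if and only if G(C) ∈ Γ, G(μ(𝒫 · S^*)) ∈ Γ, and G(μ(ℐ · S^*)) ∈ Γ. -/

import Mathlib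

open scoped Classical

namespace NCP

/-- Square max-plus matrices over the extended reals. -/
abbrev MPMat (n : ℕ) := Fin n → Fin n → EReal

/-- Max-plus matrix product: `(A ⊗ B) i j = ⨆ k, A i k + B k j`. -/
noncomputable def mpMul {n : ℕ} (A B : MPMat n) : MPMat n :=
  fun i j => ⨆ k : Fin n, A i k + B k j

/-- Max-plus identity matrix `E_⊗`. -/
noncomputable def mpId {n : ℕ} : MPMat n :=
  fun i j => if i = j then 0 else ⊥

/-- Max-plus matrix powers. -/
noncomputable def mpPow {n : ℕ} (A : MPMat n) : ℕ → MPMat n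
  | 0 => mpId
  | k + 1 => mpMul A (mpPow A k)

/-- Entrywise Kleene star `(A^*) i j = ⨆ k, (A^k) i j`. -/
noncomputable def mpStar {n : ℕ} (A : MPMat n) : MPMat n :=
  fun i j => ⨆ k : ℕ, mpPow A k i j

/-- Entrywise max of two matrices, `A ⊕ B`. -/
noncomputable def mpAdd {n : ℕ} (A B : MPMat n) : MPMat n :=
  fun i j => max (A i j) (B i j)

/-- `G(A) ∈ Γ`: all diagonal entries of all positive powers are ≤ 0. -/
def InGamma {n : ℕ} (A : MPMat n) : Prop :=
  ∀ i : Fin n, ∀ k : ℕ, 1 ≤ k → mpPow A k i i ≤ 0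

/-- `λA`: the matrix with entries `λ + A i j`. -/
noncomputable def sm {n : ℕ} (lam : ℝ) (A : MPMat n) : MPMat n :=
  fun i j => (lam : EReal) + A i j

/-- Division of an extended real by a natural number (±∞ map to ±∞). -/
noncomputable def edivNat (x : EReal) (k : ℕ) : EReal :=
  if x = ⊤ then ⊤ else if x = ⊥ then ⊥ else ((x.toReal / k : ℝ) : EReal)

/-- The maximum circuit mean of a max-plus matrix. -/
noncomputable def mcm {n : ℕ} (M : MPMat n) : EReal :=
  ⨆ k ∈ Finset.Icc 1 n, ⨆ i : Fin n, edivNat (mpPow M k i i) k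

/-- Morphism from words to max-plus matrices determined by `f` on letters. -/
noncomputable def wordMat {α : Type*} {n : ℕ} (f : α → MPMat n) : List α → MPMat n
  | [] => mpId
  | z :: s => mpMul (f z) (wordMat f s)

/-- Entrywise extension of `wordMat` to languages: `μ(L) i j = ⨆ s ∈ L, μ(s) i j`. -/
noncomputable def langMat {α : Type*} {n : ℕ} (f : α → MPMat n) (L : Language α) : MPMat n :=
  fun i j => ⨆ s ∈ L, wordMat f s i j

/-- The recursive sequence of languages `S(L₁, L₂, k)`. -/
def SL {α : Type*} (L1 L2 : Language α) : ℕ → Language α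
  | 0 => 1
  | k + 1 => L1 * SL L1 L2 k * SL L1 L2 k * L2 + L2 * SL L1 L2 k * SL L1 L2 k * L1 + 1


/-- The morphism on the three-letter alphabet `{p, i, c}` (encoded as `Fin 3` with
`p = 0`, `i = 1`, `c = 2`) sending `p` to `P`, `i` to `I` and `c` to `C`. -/
noncomputable def mu3 {n : ℕ} (P I C : MPMat n) : Fin 3 → MPMat n := ![P, I, C]

/-- The language `𝒫 = {c}^* · {p} · {c}^*` over `{p, i, c}`. -/
def langP : Language (Fin 3) :=
  KStar.kstar ({[(2 : Fin 3)]} : Language (Fin 3)) * ({[(0 : Fin 3)]} : Language (Fin 3)) *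
    KStar.kstar ({[(2 : Fin 3)]} : Language (Fin 3))

/-- The language `ℐ = {c}^* · {i} · {c}^*` over `{p, i, c}`. -/
def langI : Language (Fin 3) :=
  KStar.kstar ({[(2 : Fin 3)]} : Language (Fin 3)) * ({[(1 : Fin 3)]} : Language (Fin 3)) *
    KStar.kstar ({[(2 : Fin 3)]} : Language (Fin 3))

/-
The morphism `μ` turns concatenation of languages into the max-plus product, so `G(μ(L)) ∈ Γ` says
that no word of `L∗` labels a circuit of positive weight. One implication is then immediate. For the
other, cutting loops off a circuit of positive weight leaves one of length at most `n`. Unless its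
label lies in `{c}∗`, it is a product of at most `n` blocks from `𝒫` and `ℐ`.

If both kinds of blocks occur equally often, the label lies in `S∗`: a balanced word is a product of
two words that are empty or of the form `x v y` with `{x, y} = {𝒫, ℐ}` and `v` balanced, so nesting
depth `⌊n/2⌋` suffices. Attaching the circuit, repeated arbitrarily often, to a loop `p` or `i` at
one of its vertices then contradicts `G(μ(𝒫 · S∗)) ∈ Γ` or `G(μ(ℐ · S∗)) ∈ Γ`. If, say, `𝒫` prevails
by `d > 0` blocks, the label lies in `S∗ · (𝒫 · S∗)^d`, and a rotation of the circuit has its label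
in `(𝒫 · S∗)∗`.
-/

section

open scoped Computability

variable {α : Type*} {n : ℕ}

instance : IsAddQuantale EReal where
  add_sSup_distrib x s := by
    refine le_antisymm (EReal.add_le_of_forall_lt fun a ha b hb => ?_)
      (iSup₂_le fun y hy => by gcongr; exact le_sSup hy)
    obtain ⟨y, hy, hby⟩ := lt_sSup_iff.mp hb
    exact (add_le_add ha.le hby.le).trans (le_iSup₂ (f := fun y (_ : y ∈ s) => x + y) y hy)
  sSup_add_distrib s x := by
    refine le_antisymm (EReal.add_le_of_forall_lt fun a ha b hb => ?_)
      (iSup₂_le fun y hy => by gcongr; exact le_sSup hy)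
    obtain ⟨y, hy, hay⟩ := lt_sSup_iff.mp ha
    exact (add_le_add hay.le hb.le).trans (le_iSup₂ (f := fun y (_ : y ∈ s) => y + x) y hy)

lemma nonpos_of_forall_add_nsmul_nonpos {a x : EReal} (ha : a ≠ ⊥)
    (h : ∀ N : ℕ, a + N • x ≤ 0) : x ≤ 0 := by
  by_contra! hx
  obtain ⟨p, -, hpa⟩ := EReal.lt_iff_exists_real_btwn.mp (bot_lt_iff_ne_bot.mpr ha)
  obtain ⟨e, he, hex⟩ := EReal.lt_iff_exists_real_btwn.mp hx
  have he : 0 < e := by exact_mod_cast he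
  obtain ⟨N, hN⟩ := Archimedean.arch (1 - p) he
  have hpN : ((p + N • e : ℝ) : EReal) ≤ 0 := by
    rw [EReal.coe_add, EReal.coe_nsmul]
    exact (add_le_add hpa.le (nsmul_le_nsmul_right hex.le N)).trans (h N)
  have hpN : p + N • e ≤ 0 := by exact_mod_cast hpN
  linarith

lemma le_mpMul (A B : MPMat n) (i k j : Fin n) : A i k + B k j ≤ mpMul A B i j :=
  le_iSup (fun k => A i k + B k j) k

lemma exists_mpMul_eq (A B : MPMat n) (i j : Fin n) : ∃ k, mpMul A B i j = A i k + B k j :=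
  have : Nonempty (Fin n) := ⟨i⟩
  (exists_eq_ciSup_of_finite (f := fun k => A i k + B k j)).imp fun _ => Eq.symm

lemma mpMul_mono {A A' B B' : MPMat n} (hA : A ≤ A') (hB : B ≤ B') : mpMul A B ≤ mpMul A' B' :=
  fun i j => iSup_mono fun k => add_le_add (hA i k) (hB k j)

lemma mpMul_assoc (A B C : MPMat n) : mpMul (mpMul A B) C = mpMul A (mpMul B C) := by
  ext i j
  simp only [mpMul, AddQuantale.iSup_add_distrib, AddQuantale.add_iSup_distrib, add_assoc]
  exact iSup_comm

lemma mpId_mul (A : MPMat n) : mpMul mpId A = A := by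
  ext i j
  refine le_antisymm (iSup_le fun k => ?_) ?_
  · by_cases h : i = k <;> simp [mpId, h]
  · simpa [mpId] using le_mpMul mpId A i i j

lemma mpMul_id (A : MPMat n) : mpMul A mpId = A := by
  ext i j
  refine le_antisymm (iSup_le fun k => ?_) ?_
  · by_cases h : k = j <;> simp [mpId, h]
  · simpa [mpId] using le_mpMul A mpId i j j

lemma nsmul_le_mpPow (A : MPMat n) (i : Fin n) (N : ℕ) : N • A i i ≤ mpPow A N i i := by
  induction N with
  | zero => simp [mpPow, mpId]
  | succ N ih =>
    rw [succ_nsmul']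
    exact (add_le_add le_rfl ih).trans (le_mpMul A (mpPow A N) i i i)

lemma wordMat_singleton (f : α → MPMat n) (z : α) : wordMat f [z] = f z :=
  mpMul_id (f z)

lemma wordMat_append (f : α → MPMat n) (s t : List α) :
    wordMat f (s ++ t) = mpMul (wordMat f s) (wordMat f t) := by
  induction s with
  | nil => exact (mpId_mul _).symm
  | cons z s ih => simp only [List.cons_append, wordMat, ih, mpMul_assoc]

lemma wordMat_le_langMat (f : α → MPMat n) {L : Language α} {w : List α} (hw : w ∈ L) :
    wordMat f w ≤ langMat f L :=
  fun i j => le_iSup₂ (f := fun s (_ : s ∈ L) => wordMat f s i j) w hw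

lemma langMat_singleton (f : α → MPMat n) (w : List α) : langMat f {w} = wordMat f w := by
  ext i j
  exact iSup_singleton

lemma langMat_add (f : α → MPMat n) (L M : Language α) :
    langMat f (L + M) = mpAdd (langMat f L) (langMat f M) := by
  ext i j
  exact iSup_union

lemma langMat_mul (f : α → MPMat n) (L M : Language α) :
    langMat f (L * M) = mpMul (langMat f L) (langMat f M) := by
  apply le_antisymm
  · refine fun i j => iSup₂_le fun w hw => ?_
    obtain ⟨s, hs, t, ht, rfl⟩ := Language.mem_mul.mp hw
    rw [wordMat_append]
    exact mpMul_mono (wordMat_le_langMat f hs) (wordMat_le_langMat f ht) i j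
  · intro i j
    simp only [mpMul, langMat, iSup_subtype', AddQuantale.iSup_add_distrib,
      AddQuantale.add_iSup_distrib]
    refine iSup_le fun k => iSup_le fun t => iSup_le fun s => ?_
    calc wordMat f s i k + wordMat f t k j ≤ wordMat f (s ++ t) i j :=
          wordMat_append f s t ▸ le_mpMul _ _ i k j
      _ ≤ _ := le_iSup (fun w : {w // w ∈ L * M} => wordMat f w i j)
          ⟨s ++ t, Language.append_mem_mul s.2 t.2⟩

lemma mpPow_langMat (f : α → MPMat n) (L : Language α) (k : ℕ) :
    mpPow (langMat f L) k = langMat f (L ^ k) := by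
  induction k with
  | zero => exact (langMat_singleton f []).symm
  | succ k ih => rw [mpPow, ih, pow_succ', langMat_mul]

lemma cons_mem_kstar {L : Language α} {z : α} {w : List α} (hz : [z] ∈ L) (hw : w ∈ L∗) :
    z :: w ∈ L∗ :=
  (mul_kstar_le_kstar : L * L∗ ≤ L∗) (Language.append_mem_mul hz hw)

/-- Every circuit labelled by a word of `L` has non-positive weight. The empty word is allowed: its
circuits have weight `0`. -/
def NonposCircuits (f : α → MPMat n) (L : Language α) : Prop :=
  ∀ w ∈ L, ∀ i, wordMat f w i i ≤ 0

lemma nonposCircuits_iff_langMat (f : α → MPMat n) (L : Language α) :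
    NonposCircuits f L ↔ ∀ i, langMat f L i i ≤ 0 := by
  simp only [NonposCircuits, langMat, iSup₂_le_iff]
  exact ⟨fun h i w hw => h w hw i, fun h w hw i => h i w hw⟩

lemma NonposCircuits.mono {f : α → MPMat n} {L M : Language α} (h : NonposCircuits f M)
    (hLM : L ≤ M) : NonposCircuits f L :=
  fun w hw => h w (hLM hw)

lemma inGamma_langMat_iff (f : α → MPMat n) (L : Language α) :
    InGamma (langMat f L) ↔ NonposCircuits f L∗ := by
  simp only [InGamma, mpPow_langMat, Language.kstar_eq_iSup_pow]
  constructor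
  · intro h w hw i
    obtain ⟨k, hw⟩ := Language.mem_iSup.mp hw
    rcases k.eq_zero_or_pos with rfl | hk
    · obtain rfl : w = [] := hw
      simp [wordMat, mpId]
    · exact (wordMat_le_langMat f hw i i).trans (h i k hk)
  · exact fun h i k _ =>
      (nonposCircuits_iff_langMat f _).mp (h.mono (le_iSup (fun k => L ^ k) k)) i

protected lemma NonposCircuits.mul_comm {f : α → MPMat n} {L M : Language α}
    (h : NonposCircuits f (L * M)) : NonposCircuits f (M * L) := by
  intro w hw i
  obtain ⟨s, hs, t, ht, rfl⟩ := Language.mem_mul.mp hw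
  obtain ⟨k, hk⟩ := exists_mpMul_eq (wordMat f s) (wordMat f t) i i
  calc wordMat f (s ++ t) i i = wordMat f t k i + wordMat f s i k := by
        rw [wordMat_append, hk, add_comm]
    _ ≤ wordMat f (t ++ s) k k := wordMat_append f t s ▸ le_mpMul _ _ k i k
    _ ≤ 0 := h _ (Language.append_mem_mul ht hs) k

-- A circuit of `K∗` at `i` may be repeated arbitrarily often after a circuit of `L` at `i`.
lemma NonposCircuits.wordMat_nonpos_of_mem_kstar {f : α → MPMat n} {L K : Language α}
    (h : NonposCircuits f (L * K∗)) {i : Fin n} (hL : langMat f L i i ≠ ⊥) {w : List α}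
    (hw : w ∈ K∗) : wordMat f w i i ≤ 0 := by
  refine nonpos_of_forall_add_nsmul_nonpos hL fun N => ?_
  have hwK : ({w} : Language α) ≤ K∗ := Set.singleton_subset_iff.mpr hw
  have hwN : ({w} : Language α) ^ N ≤ K∗ :=
    (pow_le_pow_left' hwK N).trans (pow_le_kstar.trans_eq (kstar_idem K))
  calc langMat f L i i + N • wordMat f w i i
      ≤ langMat f L i i + mpPow (wordMat f w) N i i := by gcongr; exact nsmul_le_mpPow _ i N
    _ = langMat f L i i + langMat f ({w} ^ N) i i := by rw [← langMat_singleton, mpPow_langMat]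
    _ ≤ langMat f (L * {w} ^ N) i i := langMat_mul f L _ ▸ le_mpMul _ _ i i i
    _ ≤ 0 := (nonposCircuits_iff_langMat f _).mp (h.mono (by gcongr)) i

/-- The weight of the walk `v 0, v 1, v 2, …` along the arcs labelled by the letters of a word. Only
the first `w.length + 1` vertices matter. -/
noncomputable def walkWeight (f : α → MPMat n) : (ℕ → Fin n) → List α → EReal
  | _, [] => 0
  | v, z :: w => f z (v 0) (v 1) + walkWeight f (fun t => v (t + 1)) w

lemma walkWeight_append (f : α → MPMat n) (v : ℕ → Fin n) (s t : List α) :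
    walkWeight f v (s ++ t) = walkWeight f v s + walkWeight f (fun k => v (k + s.length)) t := by
  induction s generalizing v with
  | nil => simp [walkWeight]
  | cons z s ih => simp only [List.cons_append, walkWeight, ih, List.length_cons, add_assoc]

lemma walkWeight_le_wordMat (f : α → MPMat n) (v : ℕ → Fin n) (w : List α) :
    walkWeight f v w ≤ wordMat f w (v 0) (v w.length) := by
  induction w generalizing v with
  | nil => simp [walkWeight, wordMat, mpId]
  | cons z w ih => exact (add_le_add le_rfl (ih _)).trans (le_mpMul (f z) (wordMat f w) _ (v 1) _)

lemma exists_walkWeight_eq_wordMat (f : α → MPMat n) {w : List α} {i j : Fin n}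
    (h : wordMat f w i j ≠ ⊥) :
    ∃ v : ℕ → Fin n, v 0 = i ∧ v w.length = j ∧ walkWeight f v w = wordMat f w i j := by
  induction w generalizing i with
  | nil =>
    obtain rfl : i = j := by
      by_contra hij
      exact h (by simp [wordMat, mpId, hij])
    exact ⟨fun _ => i, rfl, rfl, by simp [wordMat, mpId, walkWeight]⟩
  | cons z w ih =>
    obtain ⟨k, hk⟩ := exists_mpMul_eq (f z) (wordMat f w) i j
    rw [wordMat, hk] at h
    obtain ⟨v, rfl, hvj, hv⟩ := ih (EReal.add_ne_bot_iff.mp h).2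
    exact ⟨fun t => t.casesOn i v, rfl, hvj, by rw [wordMat, hk, ← hv]; rfl⟩

lemma exists_lt_apply_eq_of_fin (v : ℕ → Fin n) : ∃ a b, a < b ∧ b ≤ n ∧ v a = v b := by
  obtain ⟨a, b, hab, hv⟩ := Fintype.exists_ne_map_eq_of_card_lt
    (fun t : Fin (n + 1) => v t) (by simp)
  rcases lt_or_gt_of_ne hab with hab | hab
  · exact ⟨a, b, hab, b.is_le, hv⟩
  · exact ⟨b, a, hab, a.is_le, hv.symm⟩

lemma exists_append_eq_wordMat_le_add_loop (f : α → MPMat n) {w : List α} {i j : Fin n}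
    (hw : n ≤ w.length) (h : wordMat f w i j ≠ ⊥) :
    ∃ s t u k, w = s ++ t ++ u ∧ t ≠ [] ∧ (s ++ t).length ≤ n ∧
      wordMat f w i j ≤ wordMat f s i k + wordMat f t k k + wordMat f u k j := by
  obtain ⟨v, rfl, rfl, hv⟩ := exists_walkWeight_eq_wordMat f h
  obtain ⟨a, b, hab, hbn, hvab⟩ := exists_lt_apply_eq_of_fin v
  obtain ⟨s, t, u, rfl, rfl, ht⟩ :
      ∃ s t u : List α, w = s ++ t ++ u ∧ s.length = a ∧ t.length = b - a :=
    ⟨w.take a, (w.drop a).take (b - a), (w.drop a).drop (b - a), by simp, by simp; omega,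
      by simp; omega⟩
  obtain rfl : b = (s ++ t).length := by rw [List.length_append]; omega
  refine ⟨s, t, u, v s.length, rfl, by rintro rfl; simp at hab, hbn, ?_⟩
  rw [← hv, walkWeight_append, walkWeight_append]
  gcongr
  · exact walkWeight_le_wordMat f v s
  · simpa [hvab, add_comm] using walkWeight_le_wordMat f (fun k => v (k + s.length)) t
  · simpa [hvab, add_comm, add_left_comm, add_assoc] using
      walkWeight_le_wordMat f (fun k => v (k + (s ++ t).length)) u

lemma wordMat_nonpos_of_length_le {f : α → MPMat n}
    (h : ∀ w : List α, w.length ≤ n → ∀ i, wordMat f w i i ≤ 0) (w : List α) (i : Fin n) :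
    wordMat f w i i ≤ 0 := by
  induction hlen : w.length using Nat.strong_induction_on generalizing w i with
  | _ m ih =>
    subst hlen
    by_contra! hpos
    have hw : n < w.length := by
      by_contra! hw
      exact hpos.not_ge (h w hw i)
    obtain ⟨s, t, u, k, rfl, ht, hst, hle⟩ :=
      exists_append_eq_wordMat_le_add_loop f hw.le hpos.ne_bot
    have ht_pos := List.length_pos_iff.mpr ht
    simp only [List.length_append] at hst hw ih
    refine hpos.not_ge ?_
    calc wordMat f (s ++ t ++ u) i i
        ≤ wordMat f s i k + wordMat f t k k + wordMat f u k i := hle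
      _ ≤ wordMat f s i k + 0 + wordMat f u k i := by
          gcongr
          exact ih t.length (by omega) t k rfl
      _ = wordMat f s i k + wordMat f u k i := by rw [add_zero]
      _ ≤ wordMat f (s ++ u) i i := wordMat_append f s u ▸ le_mpMul _ _ i k i
      _ ≤ 0 := ih (s ++ u).length (by rw [List.length_append]; omega) (s ++ u) i rfl

/-- The number of letters `x` minus the number of letters `!x` in a boolean word. -/
def excess (x : Bool) (l : List Bool) : ℤ :=
  (l.map fun y => if y = x then 1 else -1).sum

@[simp]
lemma excess_nil (x : Bool) : excess x [] = 0 :=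
  rfl

@[simp]
lemma excess_cons (x y : Bool) (l : List Bool) :
    excess x (y :: l) = (if y = x then 1 else -1) + excess x l :=
  rfl

@[simp]
lemma excess_append (x : Bool) (l m : List Bool) :
    excess x (l ++ m) = excess x l + excess x m := by
  simp [excess]

lemma excess_not (x : Bool) (l : List Bool) : excess (!x) l = -excess x l := by
  induction l with
  | nil => rfl
  | cons y l ih => cases x <;> cases y <;> simp only [excess_cons, ih] <;> grind

lemma exists_eq_append_cons_of_excess_pos {x : Bool} {l : List Bool} (h : 0 < excess x l) :
    ∃ l₁ l₂, l = l₁ ++ x :: l₂ ∧ excess x l₂ = 0 := by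
  induction l with
  | nil => simp at h
  | cons y l ih =>
    by_cases hl : 0 < excess x l
    · obtain ⟨l₁, l₂, rfl, hl₂⟩ := ih hl
      exact ⟨y :: l₁, l₂, rfl, hl₂⟩
    · rw [excess_cons] at h
      split_ifs at h with hyx
      · exact ⟨[], l, hyx ▸ rfl, by omega⟩
      · omega

lemma exists_eq_append_cons_cons_of_two_le_excess {x : Bool} :
    ∀ {l : List Bool}, 2 ≤ excess x l → ∃ l₁ l₂, l = l₁ ++ x :: x :: l₂ ∧ excess x l₂ = 0
  | [], h => by simp at h
  | [y], h => by
    rw [excess_cons, excess_nil] at h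
    split_ifs at h <;> omega
  | y :: z :: l, h => by
    by_cases hl : 2 ≤ excess x l
    · obtain ⟨l₁, l₂, rfl, hl₂⟩ := exists_eq_append_cons_cons_of_two_le_excess hl
      exact ⟨y :: z :: l₁, l₂, rfl, hl₂⟩
    by_cases hzl : 2 ≤ excess x (z :: l)
    · obtain ⟨l₁, l₂, hzl_eq, hl₂⟩ := exists_eq_append_cons_cons_of_two_le_excess hzl
      exact ⟨y :: l₁, l₂, hzl_eq ▸ rfl, hl₂⟩
    obtain ⟨rfl, rfl, hl₀⟩ : y = x ∧ z = x ∧ excess x l = 0 := by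
      simp only [excess_cons] at h hzl
      grind
    exact ⟨[], l, rfl, hl₀⟩

/-- A boolean word which is empty or of the form `x v !x` with `v` balanced. These are the words
that the recursion step of `SL` adds when `v` splits into two words of the previous step. -/
def IsArch (l : List Bool) : Prop :=
  l = [] ∨ ∃ x v, l = x :: (v ++ [!x]) ∧ excess x v = 0

-- If a balanced word starts and ends with the same letter `x`, its interior has two letters `!x`
-- too many, so the last crossing of the balanced level by the interior happens at a factor `!x !x`,
-- where the word can be cut.
lemma exists_eq_append_isArch_of_excess_eq_zero {x : Bool} {l : List Bool} (h : excess x l = 0) :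
    ∃ l₁ l₂, l = l₁ ++ l₂ ∧ IsArch l₁ ∧ IsArch l₂ := by
  obtain _ | ⟨y, l⟩ := l
  · exact ⟨[], [], rfl, .inl rfl, .inl rfl⟩
  have hy : excess y (y :: l) = 0 := by
    obtain rfl | rfl := Bool.eq_or_eq_not y x
    · exact h
    · rw [excess_not, h, neg_zero]
  obtain rfl | ⟨v, z, rfl⟩ := l.eq_nil_or_concat'
  · simp at hy
  obtain rfl | rfl := Bool.eq_or_eq_not z y
  · have hv : 2 ≤ excess (!z) v := by
      simp only [excess_cons, excess_append, excess_nil, if_true] at hy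
      rw [excess_not]
      omega
    obtain ⟨v₁, v₂, rfl, hv₂⟩ := exists_eq_append_cons_cons_of_two_le_excess hv
    refine ⟨z :: (v₁ ++ [!z]), (!z) :: (v₂ ++ [!!z]), by simp, .inr ⟨z, v₁, rfl, ?_⟩,
      .inr ⟨!z, v₂, rfl, hv₂⟩⟩
    simp only [excess_cons, excess_append, excess_nil, excess_not, if_true,
      Bool.not_eq_self, if_false, neg_eq_zero] at hv₂ hy
    omega
  · refine ⟨y :: (v ++ [!y]), [], by simp, .inr ⟨y, v, rfl, ?_⟩, .inl rfl⟩
    simpa using hy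

lemma one_le_SL (L₁ L₂ : Language α) (k : ℕ) : 1 ≤ SL L₁ L₂ k := by
  cases k with
  | zero => exact le_rfl
  | succ k => exact le_add_self

lemma mul_SL_mul_SL_mul_le_SL_succ (F : Bool → Language α) (x : Bool) (k : ℕ) :
    F x * SL (F true) (F false) k * SL (F true) (F false) k * F (!x) ≤
      SL (F true) (F false) (k + 1) := by
  cases x
  · exact le_add_self.trans le_self_add
  · exact le_self_add.trans le_self_add

lemma prod_map_le_SL_of_isArch (F : Bool → Language α) {k : ℕ} {l : List Bool} (h : IsArch l)
    (hl : l.length ≤ 2 * k + 1) : (l.map F).prod ≤ SL (F true) (F false) k := by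
  induction k generalizing l with
  | zero =>
    obtain rfl | ⟨x, v, rfl, -⟩ := h
    · exact one_le_SL _ _ 0
    · simp at hl
  | succ k ih =>
    obtain rfl | ⟨x, v, rfl, hv⟩ := h
    · exact one_le_SL _ _ (k + 1)
    obtain ⟨v₁, v₂, rfl, hv₁, hv₂⟩ := exists_eq_append_isArch_of_excess_eq_zero hv
    simp only [List.length_cons, List.length_append, List.length_nil] at hl
    calc ((x :: (v₁ ++ v₂ ++ [!x])).map F).prod
        = F x * (v₁.map F).prod * (v₂.map F).prod * F (!x) := by simp [mul_assoc]
      _ ≤ F x * SL (F true) (F false) k * SL (F true) (F false) k * F (!x) := by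
          gcongr
          · exact ih hv₁ (by omega)
          · exact ih hv₂ (by omega)
      _ ≤ SL (F true) (F false) (k + 1) := mul_SL_mul_SL_mul_le_SL_succ F x k

lemma prod_map_le_kstar_SL_of_excess_eq_zero (F : Bool → Language α) {k : ℕ} {x : Bool}
    {l : List Bool} (h : excess x l = 0) (hl : l.length ≤ 2 * k + 1) :
    (l.map F).prod ≤ (SL (F true) (F false) k)∗ := by
  obtain ⟨l₁, l₂, rfl, hl₁, hl₂⟩ := exists_eq_append_isArch_of_excess_eq_zero h
  rw [List.length_append] at hl
  rw [List.map_append, List.prod_append, ← kstar_mul_kstar]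
  exact mul_le_mul' ((prod_map_le_SL_of_isArch F hl₁ (by omega)).trans le_kstar)
    ((prod_map_le_SL_of_isArch F hl₂ (by omega)).trans le_kstar)

lemma prod_map_le_kstar_mul_pow_of_excess_eq (F : Bool → Language α) {k : ℕ} {x : Bool} {d : ℕ}
    {l : List Bool} (h : excess x l = d) (hl : l.length ≤ 2 * k + 1) :
    (l.map F).prod ≤
      (SL (F true) (F false) k)∗ * (F x * (SL (F true) (F false) k)∗) ^ d := by
  induction d generalizing l with
  | zero => simpa using prod_map_le_kstar_SL_of_excess_eq_zero F h hl
  | succ d ih =>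
    have hpos : 0 < excess x l := h ▸ Nat.cast_pos.mpr d.succ_pos
    obtain ⟨l₁, l₂, rfl, hl₂⟩ := exists_eq_append_cons_of_excess_pos hpos
    simp only [excess_append, excess_cons, if_true, List.length_append, List.length_cons] at h hl
    rw [List.map_append, List.prod_append, List.map_cons, List.prod_cons, pow_succ,
      ← mul_assoc (SL (F true) (F false) k)∗]
    gcongr
    · exact ih (by omega) (by omega)
    · exact prod_map_le_kstar_SL_of_excess_eq_zero F hl₂ (by omega)

lemma wordMat_nonpos_of_mem_prod_map {f : α → MPMat n} {F : Bool → Language α} {k : ℕ}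
    (hF : ∀ x, NonposCircuits f (F x * (SL (F true) (F false) k)∗)∗) {i : Fin n}
    (hi : ∃ x, langMat f (F x) i i ≠ ⊥) {l : List Bool} (hl : l.length ≤ 2 * k + 1) {w : List α}
    (hw : w ∈ (l.map F).prod) : wordMat f w i i ≤ 0 := by
  obtain ⟨x, d, hd⟩ : ∃ x, ∃ d : ℕ, excess x l = d := by
    obtain ⟨d, hd | hd⟩ := (excess true l).eq_nat_or_neg
    · exact ⟨true, d, hd⟩
    · exact ⟨!true, d, by rw [excess_not, hd, neg_neg]⟩
  cases d with
  | zero =>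
    obtain ⟨y, hy⟩ := hi
    exact ((hF y).mono le_kstar).wordMat_nonpos_of_mem_kstar hy
      (prod_map_le_kstar_SL_of_excess_eq_zero F hd hl hw)
  | succ d =>
    -- Rotating the circuit merges the leading balanced part into the last factor of the power.
    have hpow : (F x * (SL (F true) (F false) k)∗) ^ (d + 1) * (SL (F true) (F false) k)∗ ≤
        (F x * (SL (F true) (F false) k)∗)∗ := by
      rw [pow_succ, mul_assoc, mul_assoc (F x), kstar_mul_kstar, ← pow_succ]
      exact pow_le_kstar
    exact ((hF x).mono hpow).mul_comm w (prod_map_le_kstar_mul_pow_of_excess_eq F hd hl hw) i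

/-- The letter `p` for `true` and `i` for `false`. -/
def blockLetter (b : Bool) : Fin 3 :=
  bif b then 0 else 1

/-- The block language `𝒫` for `true` and `ℐ` for `false`. -/
def blockLang (b : Bool) : Language (Fin 3) :=
  bif b then langP else langI

lemma blockLang_eq (b : Bool) :
    blockLang b =
      ({[2]} : Language (Fin 3))∗ * {[blockLetter b]} * ({[2]} : Language (Fin 3))∗ := by
  cases b <;> rfl

lemma blockLetter_cons_mem_blockLang (b : Bool) {w : List (Fin 3)}
    (hw : w ∈ ({[2]} : Language (Fin 3))∗) :
    blockLetter b :: w ∈ blockLang b := by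
  rw [blockLang_eq]
  exact Language.append_mem_mul
    (Language.append_mem_mul (Language.nil_mem_kstar _) (Set.mem_singleton _)) hw

lemma two_cons_mem_blockLang {b : Bool} {w : List (Fin 3)} (hw : w ∈ blockLang b) :
    2 :: w ∈ blockLang b := by
  have hle : ({[2]} : Language (Fin 3)) * blockLang b ≤ blockLang b := by
    simp only [blockLang_eq, ← mul_assoc]
    gcongr
    exact mul_kstar_le_kstar
  exact hle (Language.append_mem_mul (Set.mem_singleton [2]) hw)

lemma mem_kstar_or_exists_mem_prod_blockLang (w : List (Fin 3)) :
    w ∈ ({[2]} : Language (Fin 3))∗ ∨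
      ∃ b l, (b :: l).length ≤ w.length ∧ w ∈ ((b :: l).map blockLang).prod := by
  induction w with
  | nil => exact .inl (Language.nil_mem_kstar _)
  | cons z w ih =>
    obtain rfl | ⟨b, rfl⟩ : z = 2 ∨ ∃ b, z = blockLetter b := by
      fin_cases z
      exacts [.inr ⟨true, rfl⟩, .inr ⟨false, rfl⟩, .inl rfl]
    · obtain hw | ⟨b, l, hl, hw⟩ := ih
      · exact .inl (cons_mem_kstar (Set.mem_singleton [2]) hw)
      · refine .inr ⟨b, l, hl.trans (Nat.le_succ _), ?_⟩
        obtain ⟨s, hs, t, ht, rfl⟩ := Language.mem_mul.mp hw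
        exact Language.append_mem_mul (two_cons_mem_blockLang hs) ht
    · right
      obtain hw | ⟨b', l, hl, hw⟩ := ih
      · exact ⟨b, [], by simp, by simpa using blockLetter_cons_mem_blockLang b hw⟩
      · exact ⟨b, b' :: l, Nat.succ_le_succ hl, Language.append_mem_mul
          (blockLetter_cons_mem_blockLang b (Language.nil_mem_kstar _)) hw⟩

lemma inGamma_iff_nonposCircuits_singleton (f : α → MPMat n) (z : α) :
    InGamma (f z) ↔ NonposCircuits f ({[z]} : Language α)∗ := by
  rw [← inGamma_langMat_iff, langMat_singleton, wordMat_singleton]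

lemma inGamma_mpAdd_iff_nonposCircuits_top (P I C : MPMat n) :
    InGamma (mpAdd (mpAdd P I) C) ↔ NonposCircuits (mu3 P I C) ⊤ := by
  have hsum : mpAdd (mpAdd P I) C = langMat (mu3 P I C) ({[0]} + {[1]} + {[2]}) := by
    simp only [langMat_add, langMat_singleton, wordMat_singleton]
    rfl
  have htop : ({[0]} + {[1]} + {[2]} : Language (Fin 3))∗ = ⊤ := by
    refine top_unique fun w _ => ?_
    induction w with
    | nil => exact Language.nil_mem_kstar _
    | cons z w ih =>
      refine cons_mem_kstar ?_ (ih trivial)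
      fin_cases z
      exacts [.inl (.inl rfl), .inl (.inr rfl), .inr rfl]
  rw [hsum, inGamma_langMat_iff, htop]

lemma exists_langMat_blockLang_ne_bot {P I C : MPMat n} {j : Fin n} (h : P j j ≠ ⊥ ∨ I j j ≠ ⊥) :
    ∃ b, langMat (mu3 P I C) (blockLang b) j j ≠ ⊥ := by
  have hle (b : Bool) :
      mu3 P I C (blockLetter b) j j ≤ langMat (mu3 P I C) (blockLang b) j j := by
    rw [← wordMat_singleton (mu3 P I C)]
    exact wordMat_le_langMat _ (blockLetter_cons_mem_blockLang b (Language.nil_mem_kstar _)) j j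
  obtain h | h := h
  · exact ⟨true, ne_bot_of_le_ne_bot h (hle true)⟩
  · exact ⟨false, ne_bot_of_le_ne_bot h (hle false)⟩

theorem stmt17_general (P I C : MPMat n) (hPI : ∀ j, P j j ≠ ⊥ ∨ I j j ≠ ⊥) :
    InGamma (mpAdd (mpAdd P I) C) ↔
      (InGamma C ∧
       InGamma (langMat (mu3 P I C) (langP * (SL langP langI (n / 2))∗)) ∧
       InGamma (langMat (mu3 P I C) (langI * (SL langP langI (n / 2))∗))) := by
  rw [inGamma_mpAdd_iff_nonposCircuits_top, inGamma_langMat_iff, inGamma_langMat_iff,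
    show C = mu3 P I C 2 from rfl, inGamma_iff_nonposCircuits_singleton]
  constructor
  · exact fun h => ⟨h.mono le_top, h.mono le_top, h.mono le_top⟩
  · rintro ⟨hC, hP, hI⟩ w -
    refine wordMat_nonpos_of_length_le (fun w hw i => ?_) w
    obtain hwC | ⟨b, l, hl, hwl⟩ := mem_kstar_or_exists_mem_prod_blockLang w
    · exact hC w hwC i
    · exact wordMat_nonpos_of_mem_prod_map (F := blockLang) (k := n / 2)
        (Bool.rec hI hP) (exists_langMat_blockLang_ne_bot (hPI i)) (by omega) hwl

end

/-- with `𝒫 = {c}^*·{p}·{c}^*`, `ℐ = {c}^*·{i}·{c}^*` and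
`S = S(𝒫, ℐ, ⌊n/2⌋)`, we have `G(P ⊕ I ⊕ C) ∈ Γ` iff `G(C) ∈ Γ`,
`G(μ(𝒫·S^*)) ∈ Γ` and `G(μ(ℐ·S^*)) ∈ Γ`. -/
theorem stmt17 {n : ℕ} (P I C : MPMat n)
    (hP : ∀ i j, P i j ≠ ⊤) (hI : ∀ i j, I i j ≠ ⊤) (hC : ∀ i j, C i j ≠ ⊤)
    (hPd : ∀ j, P j j ≠ ⊥) :
    InGamma (mpAdd (mpAdd P I) C) ↔
      (InGamma C ∧
       InGamma (langMat (mu3 P I C) (langP * KStar.kstar (SL langP langI (n / 2)))) ∧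
       InGamma (langMat (mu3 P I C) (langI * KStar.kstar (SL langP langI (n / 2))))) :=
  stmt17_general P I C fun j => .inl (hPd j)

end NCP
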